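/- Let n ≥ 1, let R: [0,∞) → [0,∞) be smooth, not identically 0, with R(r) ≤ A exp(−B r^{1+ε}) for some ε, A, B > 0, and suppose R′(r) vanishes only at r = 0 and at those r with R(r) = 0. Set V₀(x) = R(|x|) and let r₀ = sup{r : R(r) > 0} ∈ (0, ∞]. Let V ∈ C^∞(ℝⁿ; [0,∞)) satisfy V(x) ≤ A′ exp(−B′|x|^{1+ε′}) for some ε′, A′, B′ > 0, and suppose: (i) vol({V > s}) = vol({V₀ > s}) for every s > 0; (ii) for every s ∈ (0, R(0)), the level set {x : V(x) = s} is a Euclidean (n−1)-sphere; and (iii) |∇V(x)| = |R′(R^{−1}(V(x)))| for every x with 0 < V(x) < R(0), where R^{−1}: (0, R(0)) → (0, r₀) is the inverse of the restriction of R to (0, r₀). Then there exists x₀ ∈ ℝⁿ such that V(x) = V₀(x − x₀) for all x ∈ ℝⁿ. -/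

import Mathlib

open MeasureTheory Real

/-- The bound `A exp(-B r^(1+ε))` tends to `0` at infinity. -/
theorem tendsto_mul_exp_neg_mul_rpow {ε A B : ℝ} (hε : 0 < ε) (hB : 0 < B) :
    Filter.Tendsto (fun r : ℝ => A * Real.exp (-B * r ^ (1 + ε))) Filter.atTop (nhds 0) := by
  have h1 : Filter.Tendsto (fun r : ℝ => -B * r ^ (1 + ε)) Filter.atTop Filter.atBot :=
    (tendsto_rpow_atTop (by linarith : 0 < 1 + ε)).const_mul_atTop_of_neg (by linarith)
  simpa using (Real.tendsto_exp_atBot.comp h1).const_mul A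

/-- A nonnegative profile that decays to `0` and has no critical point in `(0, ∞)` where it is
positive is strictly larger to the left of any point of positivity. -/
theorem lt_of_lt_of_pos_of_deriv_ne_zero {R : ℝ → ℝ} (hc : ContinuousOn R (Set.Ici 0))
    (hsmall : ∀ s, 0 < s → ∀ a, ∃ b, a < b ∧ R b < s)
    (hR' : ∀ r, 0 ≤ r → deriv R r = 0 → r = 0 ∨ R r = 0)
    {a r : ℝ} (ha : 0 ≤ a) (har : a < r) (hr : 0 < R r) : R r < R a := by
  by_contra! hle
  obtain ⟨b, hrb, hb⟩ := hsmall (R r) hr r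
  have hsub : Set.Icc a b ⊆ Set.Ici 0 := fun x hx => ha.trans hx.1
  obtain ⟨m, hm, hmax⟩ := isCompact_Icc.exists_isMaxOn
    (Set.nonempty_Icc.2 (har.trans hrb).le) (hc.mono hsub)
  have hmr : R r ≤ R m := hmax ⟨har.le, hrb.le⟩
  obtain ⟨k, hk, hkmax, hkr⟩ : ∃ k ∈ Set.Ioo a b, IsMaxOn R (Set.Icc a b) k ∧ R r ≤ R k := by
    have hmb : m ≠ b := by
      rintro rfl
      linarith
    rcases hm.1.eq_or_lt with h | h
    · refine ⟨r, ⟨har, hrb⟩, fun x hx => ?_, le_rfl⟩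
      have h1 : R x ≤ R m := hmax hx
      rw [← h] at h1
      exact h1.trans hle
    · exact ⟨m, ⟨h, lt_of_le_of_ne hm.2 hmb⟩, hmax, hmr⟩
  have hd : deriv R k = 0 := (hkmax.isLocalMax (Icc_mem_nhds hk.1 hk.2)).deriv_eq_zero
  have hk0 : 0 < k := ha.trans_lt hk.1
  rcases hR' k hk0.le hd with h | h <;> linarith

/-- If a level set of a continuous function vanishing at infinity is a sphere and the corresponding
superlevel set is nonempty, then the superlevel set is the enclosed ball. -/
theorem superlevel_eq_ball_of_level_eq_sphere {E : Type*} [NormedAddCommGroup E] [NormedSpace ℝ E]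
    {V : E → ℝ} (hV : Continuous V) {s : ℝ} (hfar : ∃ K, ∀ x, K ≤ ‖x‖ → V x < s)
    {c : E} {ρ : ℝ} (hρ : 0 < ρ) (hlev : {x | V x = s} = Metric.sphere c ρ)
    (hne : {x | s < V x}.Nonempty) : {x | s < V x} = Metric.ball c ρ := by
  have hiff : ∀ x, V x = s ↔ ‖x - c‖ = ρ := fun x => by
    rw [← mem_sphere_iff_norm, ← hlev, Set.mem_ofPred_eq]
  have hout : ∀ x, s < V x → ‖x - c‖ < ρ := by
    intro x hx
    by_contra! hxc
    have hpos : 0 < ‖x - c‖ := hρ.trans_le hxc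
    have hgt : ρ < ‖x - c‖ := lt_of_le_of_ne hxc fun h => hx.ne' ((hiff x).2 h.symm)
    obtain ⟨K, hK⟩ := hfar
    set T : ℝ := max 1 ((K + ‖c‖) / ‖x - c‖) with hT
    have hT1 : 1 ≤ T := le_max_left _ _
    have hTK : K + ‖c‖ ≤ T * ‖x - c‖ := (div_le_iff₀ hpos).1 (le_max_right _ _)
    have hVT : V (c + T • (x - c)) < s := by
      apply hK
      have h1 : ‖T • (x - c)‖ ≤ ‖c + T • (x - c)‖ + ‖c‖ := by
        have := norm_sub_le (c + T • (x - c)) c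
        rwa [add_sub_cancel_left] at this
      rw [norm_smul, Real.norm_of_nonneg (by linarith)] at h1
      linarith
    have hcont : ContinuousOn (fun t : ℝ => V (c + t • (x - c))) (Set.Icc 1 T) := by
      fun_prop
    obtain ⟨t, ht, hts⟩ := intermediate_value_Icc' hT1 hcont
      (show s ∈ Set.Icc _ _ from ⟨hVT.le, by simpa using hx.le⟩)
    have h2 := (hiff _).1 hts
    rw [add_sub_cancel_left, norm_smul, Real.norm_of_nonneg (by linarith [ht.1])] at h2
    nlinarith [ht.1]
  ext x
  rw [mem_ball_iff_norm]
  refine ⟨hout x, fun hx => ?_⟩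
  by_contra hxs
  obtain ⟨y, hy⟩ := hne
  have hyb : y ∈ Metric.ball c ρ := mem_ball_iff_norm.2 (hout y hy)
  obtain ⟨z, hz, hzs⟩ := (convex_ball c ρ).isPreconnected.intermediate_value
    (mem_ball_iff_norm.2 hx) hyb hV.continuousOn ⟨not_lt.1 hxs, le_of_lt hy⟩
  exact (mem_ball_iff_norm.1 hz).ne ((hiff z).1 hzs)

/-- If the superlevel sets of `V` at heights `R r` and `R r'` are balls of radii `r < r'`, and the
gradient of `V` has the same norm as that of the radial profile, the two balls are concentric. -/
theorem center_eq_of_norm_gradient_eq {E : Type*} [NormedAddCommGroup E] [InnerProductSpace ℝ E]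
    [CompleteSpace E] {R : ℝ → ℝ} {V : E → ℝ} (hV : Differentiable ℝ V)
    (hRs : ∀ r, 0 < r → 0 < R r → HasStrictDerivAt R (deriv R r) r ∧ deriv R r ≠ 0)
    (hanti : ∀ a r, 0 ≤ a → a < r → 0 < R r → R r < R a)
    (hsurj : ∀ s, 0 < s → s < R 0 → ∃ r, 0 < r ∧ R r = s)
    (hgrad : ∀ x, 0 < V x → V x < R 0 →
      ∀ r : ℝ, 0 < r → R r = V x → ‖gradient V x‖ = |deriv R r|)
    {r r' : ℝ} (hr : 0 < r) (hrr : r < r') (hr' : 0 < R r') {c c' : E}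
    (hb : {x | R r < V x} = Metric.ball c r) (hs : {x | V x = R r} = Metric.sphere c r)
    (hb' : {x | R r' < V x} = Metric.ball c' r') (hs' : {x | V x = R r'} = Metric.sphere c' r') :
    c = c' := by
  by_contra hcc
  have hd : 0 < ‖c - c'‖ := norm_pos_iff.2 (sub_ne_zero.2 hcc)
  set d := ‖c - c'‖ with hddef
  set e : E := d⁻¹ • (c - c') with he
  have hnorm : ‖e‖ = 1 := by
    rw [he, norm_smul, norm_inv, Real.norm_of_nonneg hd.le, ← hddef, inv_mul_cancel₀ hd.ne']
  have hde : d • e = c - c' := by rw [he, smul_inv_smul₀ hd.ne']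
  have hc' : ∀ u : ℝ, c + u • e - c' = (d + u) • e := fun u => by
    rw [add_smul, hde]; abel
  have hRr : R r' < R r := hanti r r' hr.le hrr hr'
  have hle : ∀ x, r ≤ ‖x - c‖ → V x ≤ R r := fun x hx => by
    by_contra! h
    have : x ∈ Metric.ball c r := hb ▸ h
    exact absurd (mem_ball_iff_norm.1 this) (not_lt.2 hx)
  have hge : ∀ x, ‖x - c'‖ ≤ r' → R r' ≤ V x := fun x hx => by
    rcases hx.lt_or_eq with h | h
    · have : x ∈ {x | R r' < V x} := hb' ▸ mem_ball_iff_norm.2 h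
      exact le_of_lt this
    · have : x ∈ {x | V x = R r'} := hs' ▸ mem_sphere_iff_norm.2 h
      exact (show V x = R r' from this).ge
  have hr0 : R r < R 0 := hanti 0 r le_rfl hr (hr'.trans hRr)
  have hdr : d + r ≤ r' := by
    have h1 : c + r • e ∈ {x | V x = R r} := by
      rw [hs, mem_sphere_iff_norm, add_sub_cancel_left, norm_smul, hnorm,
        Real.norm_of_nonneg hr.le, mul_one]
    have h2 : c + r • e ∈ Metric.ball c' r' := by
      rw [← hb', Set.mem_ofPred_eq, show V (c + r • e) = R r from h1]
      exact hRr
    rw [mem_ball_iff_norm, hc', norm_smul, hnorm, Real.norm_of_nonneg (by linarith), mul_one] at h2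
    exact h2.le
  have hrange : ∀ u ∈ Set.Icc r (r' - d), R r' ≤ V (c + u • e) ∧ V (c + u • e) ≤ R r := by
    intro u hu
    have hu0 : 0 ≤ u := hr.le.trans hu.1
    constructor
    · apply hge
      rw [hc', norm_smul, hnorm, Real.norm_of_nonneg (by linarith), mul_one]
      linarith [hu.2]
    · apply hle
      rw [add_sub_cancel_left, norm_smul, hnorm, Real.norm_of_nonneg hu0, mul_one]
      exact hu.1
  have hinj : Set.InjOn R {t | 0 < t ∧ 0 < R t} := by
    intro a ha b hb hab
    rcases lt_trichotomy a b with h | h | h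
    · exact absurd hab (hanti a b ha.1.le h hb.2).ne'
    · exact h
    · exact absurd hab (hanti b a hb.1.le h ha.2).ne
  set g := Function.invFunOn R {t | 0 < t ∧ 0 < R t} with hg
  have hgR : ∀ t, 0 < t → 0 < R t → g (R t) = t := fun t h1 h2 =>
    hinj.leftInvOn_invFunOn (show t ∈ {t | 0 < t ∧ 0 < R t} from ⟨h1, h2⟩)
  have hder : ∀ u ∈ Set.Icc r (r' - d),
      ∃ D, HasDerivAt (fun u : ℝ => g (V (c + u • e))) D u ∧ ‖D‖ ≤ 1 := by
    intro u hu
    obtain ⟨h1, h2⟩ := hrange u hu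
    obtain ⟨t, ht, htV⟩ := hsurj (V (c + u • e)) (hr'.trans_le h1) (h2.trans_lt hr0)
    have hRt : 0 < R t := htV ▸ hr'.trans_le h1
    obtain ⟨hst, hne⟩ := hRs t ht hRt
    have hev : ∀ᶠ x in nhds t, g (R x) = x := by
      filter_upwards [lt_mem_nhds ht, hst.hasDerivAt.continuousAt.eventually (lt_mem_nhds hRt)]
        with x hx1 hx2 using hgR x hx1 hx2
    have hginv := (hst.to_local_left_inverse hne hev).hasDerivAt
    rw [htV] at hginv
    have hline : HasDerivAt (fun u : ℝ => c + u • e) e u := by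
      simpa using ((hasDerivAt_id u).smul_const e).const_add c
    have hVl := (hV (c + u • e)).hasGradientAt.hasFDerivAt.comp_hasDerivAt u hline
    refine ⟨_, HasDerivAt.comp (h₂ := g) u hginv hVl, ?_⟩
    have hG := hgrad _ (hr'.trans_le h1) (h2.trans_lt hr0) t ht htV
    rw [InnerProductSpace.toDual_apply_apply, norm_mul, norm_inv]
    have h3 := norm_inner_le_norm (𝕜 := ℝ) (gradient V (c + u • e)) e
    rw [hnorm, mul_one, hG] at h3
    rw [Real.norm_eq_abs (deriv R t), inv_mul_le_iff₀ (abs_pos.2 hne), mul_one]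
    exact h3
  choose! D hD hD1 using hder
  have hmv := (convex_Icc r (r' - d)).norm_image_sub_le_of_norm_hasDerivWithin_le
    (fun u hu => (hD u hu).hasDerivWithinAt) hD1
    (Set.left_mem_Icc.2 (by linarith)) (Set.right_mem_Icc.2 (by linarith))
  have hp : V (c + r • e) = R r := by
    have : c + r • e ∈ {x | V x = R r} := by
      rw [hs, mem_sphere_iff_norm, add_sub_cancel_left, norm_smul, hnorm,
        Real.norm_of_nonneg hr.le, mul_one]
    exact this
  have hq : V (c + (r' - d) • e) = R r' := by
    have : c + (r' - d) • e ∈ {x | V x = R r'} := by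
      rw [hs', mem_sphere_iff_norm, hc', norm_smul, hnorm, Real.norm_of_nonneg (by linarith)]
      ring
    exact this
  simp only [hp, hq] at hmv
  rw [hgR r hr (hr'.trans hRr), hgR r' (hr.trans hrr) hr', Real.norm_of_nonneg (by linarith),
    Real.norm_of_nonneg (by linarith)] at hmv
  linarith

theorem statement15 (n : ℕ) (hn : 1 ≤ n)
    (R : ℝ → ℝ) (hR : ContDiffOn ℝ (⊤ : ℕ∞) R (Set.Ici 0))
    (hRnn : ∀ r, 0 ≤ r → 0 ≤ R r)
    (hRne : ∃ r, 0 ≤ r ∧ R r ≠ 0)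
    (hRdec : ∃ ε A B : ℝ, 0 < ε ∧ 0 < A ∧ 0 < B ∧
      ∀ r, 0 ≤ r → R r ≤ A * Real.exp (-B * r ^ (1 + ε)))
    (hR' : ∀ r, 0 ≤ r → deriv R r = 0 → r = 0 ∨ R r = 0)
    (V₀ : EuclideanSpace ℝ (Fin n) → ℝ) (hV₀ : ∀ x, V₀ x = R ‖x‖)
    (V : EuclideanSpace ℝ (Fin n) → ℝ)
    (hV : ContDiff ℝ (⊤ : ℕ∞) V) (hVnn : ∀ x, 0 ≤ V x)
    (hVdec : ∃ ε A B : ℝ, 0 < ε ∧ 0 < A ∧ 0 < B ∧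
      ∀ x, V x ≤ A * Real.exp (-B * ‖x‖ ^ (1 + ε)))
    -- (i): the superlevel sets of `V` and `V₀` have equal volumes
    (hvol : ∀ s : ℝ, 0 < s → volume {x | s < V x} = volume {x | s < V₀ x})
    -- (ii): each level set `{V = s}`, `0 < s < R 0`, is a Euclidean sphere
    (hlev : ∀ s : ℝ, 0 < s → s < R 0 →
      ∃ c : EuclideanSpace ℝ (Fin n), ∃ ρ : ℝ, 0 < ρ ∧
        {x | V x = s} = Metric.sphere c ρ)
    -- (iii): `|∇V(x)| = |R'(R⁻¹(V(x)))|` whenever `0 < V x < R 0`, where `R⁻¹(V x)`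
    -- is the unique `r > 0` with `R r = V x`
    (hgrad : ∀ x, 0 < V x → V x < R 0 →
      ∀ r : ℝ, 0 < r → R r = V x → ‖gradient V x‖ = |deriv R r|) :
    ∃ x₀ : EuclideanSpace ℝ (Fin n), ∀ x, V x = V₀ (x - x₀) := by
  have : Nonempty (Fin n) := ⟨⟨0, hn⟩⟩
  have hc : ContinuousOn R (Set.Ici 0) := hR.continuousOn
  have hsmall : ∀ s, 0 < s → ∀ a, ∃ b, a < b ∧ R b < s := by
    obtain ⟨ε, A, B, hε, -, hB, h⟩ := hRdec
    intro s hs a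
    obtain ⟨b, hb, hba, hb0⟩ :=
      (((tendsto_mul_exp_neg_mul_rpow hε hB).eventually (gt_mem_nhds hs)).and
        ((Filter.eventually_gt_atTop a).and (Filter.eventually_ge_atTop 0))).exists
    exact ⟨b, hba, (h b hb0).trans_lt hb⟩
  have hfar : ∀ s, 0 < s → ∃ K, ∀ x, K ≤ ‖x‖ → V x < s := by
    obtain ⟨ε, A, B, hε, -, hB, h⟩ := hVdec
    intro s hs
    obtain ⟨K, hK⟩ := Filter.eventually_atTop.1
      ((tendsto_mul_exp_neg_mul_rpow hε hB).eventually (gt_mem_nhds hs))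
    exact ⟨K, fun x hx => (h x).trans_lt (hK _ hx)⟩
  have hanti : ∀ a r, 0 ≤ a → a < r → 0 < R r → R r < R a := fun a r ha har hr =>
    lt_of_lt_of_pos_of_deriv_ne_zero hc hsmall hR' ha har hr
  have hRs : ∀ r, 0 < r → 0 < R r → HasStrictDerivAt R (deriv R r) r ∧ deriv R r ≠ 0 := by
    intro r hr hRr
    refine ⟨(hR.contDiffAt (Ici_mem_nhds hr)).hasStrictDerivAt (by simp), fun h => ?_⟩
    rcases hR' r hr.le h with h | h <;> linarith
  have hR0 : 0 < R 0 := by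
    obtain ⟨r, hr, hne⟩ := hRne
    have hpos := lt_of_le_of_ne (hRnn r hr) hne.symm
    rcases hr.eq_or_lt with rfl | h
    · exact hpos
    · exact hpos.trans (hanti 0 r le_rfl h hpos)
  have hsurj : ∀ s, 0 < s → s < R 0 → ∃ r, 0 < r ∧ R r = s := by
    intro s hs hs0
    obtain ⟨b, hb, hbs⟩ := hsmall s hs 0
    obtain ⟨r, hr, hrs⟩ := intermediate_value_Icc' hb.le
      (hc.mono Set.Icc_subset_Ici_self) ⟨hbs.le, hs0.le⟩
    refine ⟨r, lt_of_le_of_ne hr.1 ?_, hrs⟩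
    rintro rfl
    linarith
  have hball : ∀ r, 0 < r → 0 < R r → ∃ c, {x | R r < V x} = Metric.ball c r ∧
      {x | V x = R r} = Metric.sphere c r := by
    intro r hr hRr
    obtain ⟨c, ρ, hρ, hsph⟩ := hlev (R r) hRr (hanti 0 r le_rfl hr hRr)
    have hV0 : {x | R r < V₀ x} = Metric.ball 0 r := by
      ext x
      rw [Set.mem_ofPred_eq, hV₀, mem_ball_zero_iff]
      refine ⟨fun h => ?_, fun h => hanti _ r (norm_nonneg x) h hRr⟩
      by_contra! hrx
      rcases hrx.eq_or_lt with h' | h'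
      · rw [h'] at h
        exact h.false
      · exact (h.trans (hanti r _ hr.le h' (hRr.trans h))).false
    have hv : volume {x | R r < V x} = volume (Metric.ball (0 : EuclideanSpace ℝ (Fin n)) r) := by
      rw [hvol _ hRr, hV0]
    have hne : {x | R r < V x}.Nonempty := by
      apply nonempty_of_measure_ne_zero (μ := volume)
      rw [hv]
      exact (Metric.measure_ball_pos volume 0 hr).ne'
    have hb := superlevel_eq_ball_of_level_eq_sphere hV.continuous (hfar _ hRr) hρ hsph hne
    have hρr : ρ = r := by
      rw [hb, Measure.addHaar_ball _ _ hρ.le, Measure.addHaar_ball _ _ hr.le,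
        ENNReal.mul_left_inj (Metric.measure_ball_pos volume 0 one_pos).ne' measure_ball_lt_top.ne,
        ENNReal.ofReal_eq_ofReal_iff (by positivity) (by positivity)] at hv
      refine (pow_left_inj₀ hρ.le hr.le ?_).1 hv
      rw [finrank_euclideanSpace_fin]
      omega
    subst hρr
    exact ⟨c, hb, hsph⟩
  choose! c hcb hcs using hball
  have hceq : ∀ r r', 0 < r → 0 < R r → 0 < r' → 0 < R r' → c r = c r' := by
    intro r r' h1 h2 h3 h4
    have hVd : Differentiable ℝ V := hV.differentiable (by simp)
    rcases lt_trichotomy r r' with h | rfl | h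
    · exact center_eq_of_norm_gradient_eq hVd hRs hanti hsurj hgrad h1 h h4
        (hcb r h1 h2) (hcs r h1 h2) (hcb r' h3 h4) (hcs r' h3 h4)
    · rfl
    · exact (center_eq_of_norm_gradient_eq hVd hRs hanti hsurj hgrad h3 h h2
        (hcb r' h3 h4) (hcs r' h3 h4) (hcb r h1 h2) (hcs r h1 h2)).symm
  obtain ⟨r₁, hr₁, hRr₁⟩ := hsurj (R 0 / 2) (by linarith) (by linarith)
  have hRr₁' : 0 < R r₁ := by linarith
  refine ⟨c r₁, ?_⟩
  have hbx : ∀ r, 0 < r → 0 < R r → ∀ x, R r < V x ↔ ‖x - c r₁‖ < r := fun r h1 h2 x => by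
    rw [← mem_ball_iff_norm, hceq r₁ r hr₁ hRr₁' h1 h2, ← hcb r h1 h2, Set.mem_ofPred_eq]
  have hsx : ∀ r, 0 < r → 0 < R r → ∀ x, V x = R r ↔ ‖x - c r₁‖ = r := fun r h1 h2 x => by
    rw [← mem_sphere_iff_norm, hceq r₁ r hr₁ hRr₁' h1 h2, ← hcs r h1 h2, Set.mem_ofPred_eq]
  have hoff : ∀ x, x ≠ c r₁ → V x = R ‖x - c r₁‖ := by
    intro x hx
    have hpos : 0 < ‖x - c r₁‖ := norm_pos_iff.2 (sub_ne_zero.2 hx)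
    rcases (hRnn _ hpos.le).eq_or_lt with h0 | h0
    · rcases (hVnn x).eq_or_lt with hv | hv
      · rw [← h0, ← hv]
      obtain ⟨r, hr, hRr⟩ := hsurj (min (V x) (R r₁)) (lt_min hv hRr₁')
        ((min_le_right _ _).trans_lt (by linarith))
      have hRr0 : 0 < R r := hRr ▸ lt_min hv hRr₁'
      have hle : R r ≤ V x := hRr ▸ min_le_left _ _
      have hle' : ‖x - c r₁‖ ≤ r := by
        rcases hle.eq_or_lt with h | h
        · exact ((hsx r hr hRr0 x).1 h.symm).le
        · exact ((hbx r hr hRr0 x).1 h).le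
      rcases hle'.eq_or_lt with h | h
      · rw [h] at h0
        linarith
      · linarith [hanti _ r hpos.le h hRr0]
    · exact (hsx _ hpos h0 x).2 rfl
  have hcontR : Continuous fun x => R ‖x - c r₁‖ :=
    hc.comp_continuous (by fun_prop) fun x => norm_nonneg _
  have hfun : V = fun x => R ‖x - c r₁‖ :=
    Continuous.ext_on (dense_compl_singleton (c r₁)) hV.continuous hcontR fun x hx => hoff x hx
  intro x
  rw [hV₀]
  exact congrFun hfun x
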